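/- Define, in F = ℚ(u, t), for 0 ≤ i ≤ j: c_{ij} = u^{(j−i)(j−i+2)/4} t^{j−i} (1 − u^{i} t) (∏_{k=i+1}^{j}(u^{k} − 1)) / ((1 − u^{j} t) ∏_{k=1}^{(j−i)/2}(1 − u^{i+j−1+2k} t^{2})(u^{2k} − 1)) if i ≡ j (mod 2), and c_{ij} = u^{((j−i)^2 − 1)/4} t^{j−i} (∏_{k=i+1}^{j}(u^{k} − 1)) / ((1 − u^{j} t) ∏_{k=1}^{(j−i−1)/2}(1 − u^{i+j+2k} t^{2})(u^{2k} − 1)) if i ≢ j (mod 2); set c_{ij} = 0 for i > j. Then for every integer n ≥ 0, the (n+1)×(n+1) matrices B = (b_{ij})_{0 ≤ i,j ≤ n} and C = (c_{ij})_{0 ≤ i,j ≤ n} satisfy B·C = I_{n+1}; equivalently, ∑_{k=i}^{j} b_{ik} c_{kj} equals 1 if i = j and equals 0 if i < j. (This is the explicit inverse of the change-of-basis matrix between the Eisenstein series attached to the cusps w_ν and the U(p)-eigenfunctions, for the trivial character.) -/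

import Mathlib

/-- `F = ℚ(u, t)`, the field of rational functions in two independent
indeterminates over `ℚ`; `u` stands for the odd prime `p` and `t` for `p^{−s}`. -/
noncomputable abbrev Fut : Type := FractionRing (MvPolynomial (Fin 2) ℚ)

/-- The indeterminate `u` viewed inside `Fut`. -/
noncomputable def U : Fut := algebraMap (MvPolynomial (Fin 2) ℚ) Fut (MvPolynomial.X 0)

/-- The indeterminate `t` viewed inside `Fut`. -/
noncomputable def T : Fut := algebraMap (MvPolynomial (Fin 2) ℚ) Fut (MvPolynomial.X 1)

/-!
Up to conjugation by a diagonal matrix and row and column factors, the entries of `B` and `C` at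
distance `2 r` or `2 r + 1` from the diagonal are `q`-hypergeometric terms with base `q = u ^ 2`.
In row `i` and column `j` of the product, group the summands `k = i + 2 r` and `k = i + 2 r + 1`.
If `j - i` is odd, each such pair cancels. If `j - i = 2 m` is even, the pair collapses to a factor
independent of `r` times a summand of the orthogonality relation
`∑_{r + s = m} (-1)^s q^(s(s-1)/2) / ((aq)_r (q)_r (a q^(2r+s))_s (q)_s) = δ_{m,0}` with
`a = u^(2i+1) t^2`, which is the relation behind the Bailey matrix inversion. That relation
telescopes because `(1 - q^m) (1 - a q^m) = (1 - q^s) (1 - a q^(2r+s)) + q^s (1 - q^r) (1 - a q^r)`.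
-/

open Finset

section Antidiagonal

theorem sum_antidiagonal_two_mul_add_one {M : Type*} [AddCommMonoid M] (f : ℕ × ℕ → M) (m : ℕ) :
    ∑ p ∈ antidiagonal (2 * m + 1), f p =
      ∑ p ∈ antidiagonal m, (f (2 * p.1, 2 * p.2 + 1) + f (2 * p.1 + 1, 2 * p.2)) := by
  induction m generalizing f with
  | zero => simp [Nat.sum_antidiagonal_succ]
  | succ m ih =>
    rw [show 2 * (m + 1) + 1 = 2 * m + 1 + 1 + 1 by ring, Nat.sum_antidiagonal_succ,
      Nat.sum_antidiagonal_succ, ih fun p => f (p.1 + 1 + 1, p.2), Nat.sum_antidiagonal_succ,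
      ← add_assoc]
    rfl

theorem sum_antidiagonal_two_mul_add_two {M : Type*} [AddCommMonoid M] (f : ℕ × ℕ → M) (m : ℕ) :
    ∑ p ∈ antidiagonal (2 * m + 2), f p = f (2 * m + 2, 0) +
      ∑ p ∈ antidiagonal m, (f (2 * p.1, 2 * p.2 + 2) + f (2 * p.1 + 1, 2 * p.2 + 1)) := by
  rw [Nat.sum_antidiagonal_succ', sum_antidiagonal_two_mul_add_one fun p => f (p.1, p.2 + 1)]

theorem sum_range_mul_eq_sum_antidiagonal {R : Type*} [NonUnitalNonAssocSemiring R]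
    {f g : ℕ → ℕ → R} (hf : ∀ i j, j < i → f i j = 0)
    (hg : ∀ i j, j < i → g i j = 0) {i d n : ℕ} (hn : i + d < n) :
    ∑ k ∈ range n, f i k * g k (i + d) =
      ∑ p ∈ antidiagonal d, f i (i + p.1) * g (i + p.1) (i + p.1 + p.2) := by
  have hsupport : ∑ k ∈ Ico i (i + d + 1), f i k * g k (i + d) =
      ∑ k ∈ range n, f i k * g k (i + d) := by
    refine sum_subset (fun k hk => ?_) fun k _ hk => ?_
    · simp only [mem_Ico, mem_range] at hk ⊢
      omega
    · rcases lt_or_ge k i with hki | hik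
      · rw [hf i k hki, zero_mul]
      · rw [hg k (i + d) (by simp only [mem_Ico] at hk; omega), mul_zero]
  rw [← hsupport, sum_Ico_eq_sum_range, show i + d + 1 - i = d + 1 by omega,
    ← Nat.sum_antidiagonal_eq_sum_range_succ_mk fun p : ℕ × ℕ =>
      f i (i + p.1) * g (i + p.1) (i + d)]
  refine sum_congr rfl fun p hp => ?_
  rw [add_assoc, mem_antidiagonal.1 hp]

theorem of_mul_of_eq_one_of_sum_antidiagonal {R : Type*} [NonAssocSemiring R]
    {f g : ℕ → ℕ → R} (hf : ∀ i j, j < i → f i j = 0)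
    (hg : ∀ i j, j < i → g i j = 0)
    (hfg : ∀ i d, ∑ p ∈ antidiagonal d, f i (i + p.1) * g (i + p.1) (i + p.1 + p.2) =
      if d = 0 then 1 else 0) (n : ℕ) :
    (Matrix.of fun i j : Fin n => f i j) * (Matrix.of fun i j : Fin n => g i j) = 1 := by
  ext i j
  rw [Matrix.mul_apply, Matrix.one_apply]
  simp only [Matrix.of_apply, Fin.ext_iff]
  rw [Fin.sum_univ_eq_sum_range (fun k => f i k * g k j) n]
  rcases lt_or_ge (j : ℕ) i with hji | hij
  · rw [if_neg hji.ne']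
    refine sum_eq_zero fun k _ => ?_
    rcases lt_or_ge k (i : ℕ) with hki | hik
    · rw [hf i k hki, zero_mul]
    · rw [hg k j (hji.trans_le hik), mul_zero]
  · obtain ⟨d, hd⟩ := Nat.exists_eq_add_of_le hij
    rw [hd, sum_range_mul_eq_sum_antidiagonal hf hg (hd ▸ j.isLt), hfg]
    simp

end Antidiagonal

theorem prod_Icc_mul_prod_Icc_add {M : Type*} [CommMonoid M] (f : ℕ → M) (i r s : ℕ) :
    (∏ k ∈ Icc (i + 1) (i + r), f k) * ∏ k ∈ Icc (i + r + 1) (i + r + s), f k =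
      ∏ k ∈ Icc (i + 1) (i + r + s), f k := by
  simp only [Icc_add_one_left_eq_Ioc]
  exact prod_Ioc_consecutive f (by omega) (by omega)

section QPochhammer

/-- The finite `q`-Pochhammer symbol `(a; q)_n = (1 - a) (1 - a q) ⋯ (1 - a q ^ (n - 1))`. -/
def qPochhammer {R : Type*} [CommRing R] (a q : R) (n : ℕ) : R :=
  ∏ k ∈ range n, (1 - a * q ^ k)

variable {R : Type*} [CommRing R]

@[simp]
theorem qPochhammer_zero (a q : R) : qPochhammer a q 0 = 1 := prod_range_zero _

theorem qPochhammer_succ (a q : R) (n : ℕ) :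
    qPochhammer a q (n + 1) = qPochhammer a q n * (1 - a * q ^ n) :=
  prod_range_succ _ n

theorem qPochhammer_succ' (a q : R) (n : ℕ) :
    qPochhammer a q (n + 1) = (1 - a) * qPochhammer (a * q) q n := by
  simp only [qPochhammer, prod_range_succ', pow_zero, mul_one, pow_succ', mul_assoc]
  exact mul_comm _ _

theorem qPochhammer_self_succ (q : R) (n : ℕ) :
    qPochhammer q q (n + 1) = qPochhammer q q n * (1 - q ^ (n + 1)) := by
  rw [qPochhammer_succ, pow_succ']

theorem prod_Icc_mul_eq_qPochhammer (u x : R) (e n : ℕ) :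
    ∏ k ∈ Icc 1 n, ((1 - u ^ (e + 2 * k) * x) * (u ^ (2 * k) - 1)) =
      (-1) ^ n * (qPochhammer (u ^ (e + 2) * x) (u ^ 2) n * qPochhammer (u ^ 2) (u ^ 2) n) := by
  induction n with
  | zero => simp
  | succ n ih =>
    rw [prod_Icc_succ_top (by omega), ih, qPochhammer_succ, qPochhammer_self_succ]
    ring

end QPochhammer

section Bailey

variable {K : Type*} [Field K]

/-- The summand of the orthogonality relation behind the Bailey matrix inversion: the product of an
entry of the Bailey matrix at distance `r` from the diagonal with an entry of its inverse at
distance `s`. -/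
def baileySummand (a q : K) (r s : ℕ) : K :=
  (-1) ^ s * q ^ s.choose 2 /
    (qPochhammer (a * q) q r * qPochhammer q q r *
      (qPochhammer (a * q ^ (2 * r + s)) q s * qPochhammer q q s))

variable {a q : K}

theorem baileySummand_shift (hq : ∀ k ≠ 0, q ^ k ≠ 1) (ha : ∀ k ≠ 0, a * q ^ k ≠ 1) (r s : ℕ) :
    baileySummand a q r (s + 1) * ((1 - q ^ (s + 1)) * (1 - a * q ^ (2 * r + (s + 1)))) =
      -(baileySummand a q (r + 1) s * (q ^ s * ((1 - q ^ (r + 1)) * (1 - a * q ^ (r + 1))))) := by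
  have hqr := sub_ne_zero.2 (hq (r + 1) r.succ_ne_zero).symm
  have hqs := sub_ne_zero.2 (hq (s + 1) s.succ_ne_zero).symm
  have har := sub_ne_zero.2 (ha (r + 1) r.succ_ne_zero).symm
  have hars := sub_ne_zero.2 (ha (2 * r + (s + 1)) (by omega)).symm
  have hfactor :
      qPochhammer (a * q) q (r + 1) = qPochhammer (a * q) q r * (1 - a * q ^ (r + 1)) := by
    rw [qPochhammer_succ, mul_assoc a, pow_succ']
  have hshift : a * q ^ (2 * r + (s + 1)) * q = a * q ^ (2 * (r + 1) + s) := by ring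
  rw [baileySummand, baileySummand, hfactor, qPochhammer_self_succ, qPochhammer_self_succ,
    qPochhammer_succ', hshift, Nat.choose_succ_succ' s 1, Nat.choose_one_right]
  field_simp
  ring

theorem sum_antidiagonal_baileySummand (hq : ∀ k ≠ 0, q ^ k ≠ 1) (ha : ∀ k ≠ 0, a * q ^ k ≠ 1)
    (m : ℕ) :
    ∑ p ∈ antidiagonal m, baileySummand a q p.1 p.2 = if m = 0 then 1 else 0 := by
  rcases m with _ | m
  · simp [baileySummand]
  let down (p : ℕ × ℕ) : K :=
    baileySummand a q p.1 p.2 * ((1 - q ^ p.2) * (1 - a * q ^ (2 * p.1 + p.2)))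
  let up (p : ℕ × ℕ) : K :=
    baileySummand a q p.1 p.2 * (q ^ p.2 * ((1 - q ^ p.1) * (1 - a * q ^ p.1)))
  have hsplit : (1 - q ^ (m + 1)) * (1 - a * q ^ (m + 1)) *
      ∑ p ∈ antidiagonal (m + 1), baileySummand a q p.1 p.2 =
        ∑ p ∈ antidiagonal (m + 1), down p + ∑ p ∈ antidiagonal (m + 1), up p := by
    rw [mul_sum, ← sum_add_distrib]
    refine sum_congr rfl fun p hp => ?_
    rw [← mem_antidiagonal.1 hp]
    simp only [down, up]
    ring
  have hcancel : ∑ p ∈ antidiagonal (m + 1), down p + ∑ p ∈ antidiagonal (m + 1), up p = 0 := by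
    have hdown : down (m + 1, 0) = 0 := by simp [down]
    have hup : up (0, m + 1) = 0 := by simp [up]
    rw [Nat.sum_antidiagonal_succ', Nat.sum_antidiagonal_succ, hdown, hup, zero_add, zero_add,
      ← sum_add_distrib]
    exact sum_eq_zero fun p _ => by
      simp only [down, up, baileySummand_shift hq ha, neg_add_cancel]
  have hqm := sub_ne_zero.2 (hq (m + 1) m.succ_ne_zero).symm
  have ham := sub_ne_zero.2 (ha (m + 1) m.succ_ne_zero).symm
  rw [if_neg m.succ_ne_zero]
  exact (mul_eq_zero.1 (hsplit.trans hcancel)).resolve_left (mul_ne_zero hqm ham)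

end Bailey

section Coefficients

variable {K : Type*} [Field K]

/-- The entry `b_{ij}` of the change-of-basis matrix, with `u` and `t` in an arbitrary field. -/
def bCoeff (u t : K) (i j : ℕ) : K :=
  if j < i then 0
  else if (j - i) % 2 = 0 then
    (-1) ^ ((j - i) / 2) * t ^ (j - i) * (1 - u ^ (j + 1) * t) *
        (∏ k ∈ Icc (i + 1) j, (u ^ k - 1)) /
      ((1 - u ^ (i + 1) * t) *
        ∏ k ∈ Icc 1 ((j - i) / 2), ((1 - u ^ (2 * i + 1 + 2 * k) * t ^ 2) * (u ^ (2 * k) - 1)))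
  else
    (-1) ^ ((j - i + 1) / 2) * t ^ (j - i) * (∏ k ∈ Icc (i + 1) j, (u ^ k - 1)) /
      ((1 - u ^ (i + 1) * t) *
        ∏ k ∈ Icc 1 ((j - i - 1) / 2), ((1 - u ^ (2 * i + 1 + 2 * k) * t ^ 2) * (u ^ (2 * k) - 1)))

/-- The entry `c_{ij}` of the inverse matrix, with `u` and `t` in an arbitrary field. The truncated
exponent `i + j - 1` matters only for `i = j = 0`, where the product is empty. -/
def cCoeff (u t : K) (i j : ℕ) : K :=
  if j < i then 0
  else if (j - i) % 2 = 0 then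
    u ^ ((j - i) * (j - i + 2) / 4) * t ^ (j - i) * (1 - u ^ i * t) *
        (∏ k ∈ Icc (i + 1) j, (u ^ k - 1)) /
      ((1 - u ^ j * t) *
        ∏ k ∈ Icc 1 ((j - i) / 2), ((1 - u ^ (i + j - 1 + 2 * k) * t ^ 2) * (u ^ (2 * k) - 1)))
  else
    u ^ (((j - i) ^ 2 - 1) / 4) * t ^ (j - i) * (∏ k ∈ Icc (i + 1) j, (u ^ k - 1)) /
      ((1 - u ^ j * t) *
        ∏ k ∈ Icc 1 ((j - i - 1) / 2), ((1 - u ^ (i + j + 2 * k) * t ^ 2) * (u ^ (2 * k) - 1)))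

/-- The part of `b_{i,i+d}` that remains after removing the row factor `1 / (1 - u ^ (i + 1) t)`
and the diagonal conjugation factor `t ^ d ∏ (u ^ k - 1)`. -/
def reducedB (u t : K) (i d : ℕ) : K :=
  (if Even d then 1 - u ^ (i + d + 1) * t else -1) /
    (qPochhammer (u ^ (2 * i + 3) * t ^ 2) (u ^ 2) (d / 2) *
      qPochhammer (u ^ 2) (u ^ 2) (d / 2))

/-- The part of `c_{i,i+d}` that remains after removing the column factor
`1 / (1 - u ^ (i + d) t)` and the diagonal conjugation factor `t ^ d ∏ (u ^ k - 1)`. The summand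
`d % 2` merges the exponents `2 i + 2 s + 1` for `d = 2 s` and `2 i + 2 s + 3` for
`d = 2 s + 1`. -/
def reducedC (u t : K) (i d : ℕ) : K :=
  (-1) ^ (d / 2) * u ^ (d / 2 * (d / 2 + 1)) * (if Even d then 1 - u ^ i * t else 1) /
    (qPochhammer (u ^ (2 * i + d + d % 2 + 1) * t ^ 2) (u ^ 2) (d / 2) *
      qPochhammer (u ^ 2) (u ^ 2) (d / 2))

variable (u t : K)

theorem reducedB_two_mul (i r : ℕ) :
    reducedB u t i (2 * r) = (1 - u ^ (i + 2 * r + 1) * t) /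
      (qPochhammer (u ^ (2 * i + 3) * t ^ 2) (u ^ 2) r * qPochhammer (u ^ 2) (u ^ 2) r) := by
  simp [reducedB]

theorem reducedB_two_mul_add_one (i r : ℕ) :
    reducedB u t i (2 * r + 1) = -1 /
      (qPochhammer (u ^ (2 * i + 3) * t ^ 2) (u ^ 2) r * qPochhammer (u ^ 2) (u ^ 2) r) := by
  simp [reducedB, show (2 * r + 1) / 2 = r by omega]

theorem reducedC_two_mul (i s : ℕ) :
    reducedC u t i (2 * s) = (-1) ^ s * u ^ (s * (s + 1)) * (1 - u ^ i * t) /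
      (qPochhammer (u ^ (2 * i + 2 * s + 1) * t ^ 2) (u ^ 2) s *
        qPochhammer (u ^ 2) (u ^ 2) s) := by
  simp [reducedC]

theorem reducedC_two_mul_add_one (i s : ℕ) :
    reducedC u t i (2 * s + 1) = (-1) ^ s * u ^ (s * (s + 1)) /
      (qPochhammer (u ^ (2 * i + 2 * s + 3) * t ^ 2) (u ^ 2) s *
        qPochhammer (u ^ 2) (u ^ 2) s) := by
  simp [reducedC, show (2 * s + 1) / 2 = s by omega, ← add_assoc]

theorem bCoeff_of_lt (i j : ℕ) (h : j < i) : bCoeff u t i j = 0 := if_pos h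

theorem cCoeff_of_lt (i j : ℕ) (h : j < i) : cCoeff u t i j = 0 := if_pos h

theorem bCoeff_add (i d : ℕ) :
    bCoeff u t i (i + d) =
      t ^ d * (∏ k ∈ Icc (i + 1) (i + d), (u ^ k - 1)) / (1 - u ^ (i + 1) * t) *
        reducedB u t i d := by
  rw [bCoeff, if_neg (by omega), Nat.add_sub_cancel_left, prod_Icc_mul_eq_qPochhammer,
    prod_Icc_mul_eq_qPochhammer]
  obtain ⟨r, rfl | rfl⟩ := Nat.even_or_odd' d
  · rw [if_pos (by omega), reducedB_two_mul, show 2 * r / 2 = r by omega]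
    field_simp
  · rw [if_neg (by omega), reducedB_two_mul_add_one, show (2 * r + 1 + 1) / 2 = r + 1 by omega,
      show (2 * r + 1 - 1) / 2 = r by omega, pow_succ]
    field_simp

theorem cCoeff_add (i d : ℕ) :
    cCoeff u t i (i + d) =
      t ^ d * (∏ k ∈ Icc (i + 1) (i + d), (u ^ k - 1)) / (1 - u ^ (i + d) * t) *
        reducedC u t i d := by
  rw [cCoeff, if_neg (by omega), Nat.add_sub_cancel_left, prod_Icc_mul_eq_qPochhammer,
    prod_Icc_mul_eq_qPochhammer]
  obtain ⟨s, rfl | rfl⟩ := Nat.even_or_odd' d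
  · have hexp : 2 * s * (2 * s + 2) / 4 = s * (s + 1) := by
      rw [show 2 * s * (2 * s + 2) = s * (s + 1) * 4 by ring, Nat.mul_div_cancel _ four_pos]
    rw [if_pos (by omega), reducedC_two_mul, show 2 * s / 2 = s by omega, hexp]
    rcases s with _ | s
    · simp [div_eq_inv_mul]
    · rw [show i + (i + 2 * (s + 1)) - 1 + 2 = 2 * i + 2 * (s + 1) + 1 by omega]
      field_simp
      simp [← pow_mul]
  · have hexp : ((2 * s + 1) ^ 2 - 1) / 4 = s * (s + 1) := by
      rw [show (2 * s + 1) ^ 2 = s * (s + 1) * 4 + 1 by ring, Nat.add_sub_cancel,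
        Nat.mul_div_cancel _ four_pos]
    rw [if_neg (by omega), reducedC_two_mul_add_one, show (2 * s + 1 - 1) / 2 = s by omega, hexp,
      show i + (i + (2 * s + 1)) + 2 = 2 * i + 2 * s + 3 by ring]
    field_simp
    simp [← pow_mul]

theorem reducedB_mul_reducedC_add_eq_zero (i r s : ℕ) :
    reducedB u t i (2 * r) * reducedC u t (i + 2 * r) (2 * s + 1) +
      reducedB u t i (2 * r + 1) * reducedC u t (i + (2 * r + 1)) (2 * s) = 0 := by
  rw [reducedB_two_mul, reducedB_two_mul_add_one, reducedC_two_mul, reducedC_two_mul_add_one,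
    show 2 * (i + (2 * r + 1)) + 2 * s + 1 = 2 * (i + 2 * r) + 2 * s + 3 by ring]
  ring

variable {u t}

theorem reducedB_mul_reducedC_add_eq_mul_baileySummand (hu : ∀ k ≠ 0, u ^ k ≠ 1)
    (ht : ∀ k, u ^ (2 * k + 1) * t ^ 2 ≠ 1) (i r s : ℕ) :
    reducedB u t i (2 * r) * reducedC u t (i + 2 * r) (2 * s + 2) +
      reducedB u t i (2 * r + 1) * reducedC u t (i + (2 * r + 1)) (2 * s + 1) =
        (1 - u ^ (i + 2 * (r + s + 1)) * t) * (1 - u ^ (i + 2 * (r + s + 1) + 1) * t) *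
          baileySummand (u ^ (2 * i + 1) * t ^ 2) (u ^ 2) r (s + 1) := by
  have hus : 1 - (u ^ 2) ^ (s + 1) ≠ 0 := by
    rw [← pow_mul]
    exact sub_ne_zero.2 (hu _ (by omega)).symm
  have hts : 1 - u ^ (2 * (i + 2 * r + s + 1) + 1) * t ^ 2 ≠ 0 := sub_ne_zero.2 (ht _).symm
  have hC_even : u ^ (2 * (i + 2 * r) + 2 * (s + 1) + 1) =
      u ^ (2 * (i + 2 * r + s + 1) + 1) := by ring
  have hC_odd : u ^ (2 * (i + (2 * r + 1)) + 2 * s + 3) * t ^ 2 =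
      u ^ (2 * (i + 2 * r + s + 1) + 1) * t ^ 2 * u ^ 2 := by ring
  have hbailey : u ^ (2 * i + 1) * t ^ 2 * (u ^ 2) ^ (2 * r + (s + 1)) =
      u ^ (2 * (i + 2 * r + s + 1) + 1) * t ^ 2 := by ring
  have hbailey_zero : u ^ (2 * i + 1) * t ^ 2 * u ^ 2 = u ^ (2 * i + 3) * t ^ 2 := by ring
  have hchoose : (u ^ 2) ^ (s + 1).choose 2 = u ^ (s * (s + 1)) := by
    rw [← pow_mul, mul_comm, ← Nat.add_one_mul_choose_eq, Nat.choose_one_right, mul_comm]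
  have hcollapse : u ^ (2 * (s + 1)) * (1 - u ^ (i + 2 * r) * t) * (1 - u ^ (i + 2 * r + 1) * t) +
      (1 - (u ^ 2) ^ (s + 1)) * (1 - u ^ (2 * (i + 2 * r + s + 1) + 1) * t ^ 2) =
        (1 - u ^ (i + 2 * (r + s + 1)) * t) * (1 - u ^ (i + 2 * (r + s + 1) + 1) * t) := by ring
  rw [reducedB_two_mul, reducedB_two_mul_add_one, show 2 * s + 2 = 2 * (s + 1) by ring,
    reducedC_two_mul, reducedC_two_mul_add_one, baileySummand, hC_even, hC_odd, hbailey,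
    hbailey_zero, hchoose, qPochhammer_succ', qPochhammer_self_succ, ← hcollapse]
  generalize 1 - (u ^ 2) ^ (s + 1) = x at hus ⊢
  generalize 1 - u ^ (2 * (i + 2 * r + s + 1) + 1) * t ^ 2 = y at hts ⊢
  field_simp
  ring

theorem sum_antidiagonal_reducedB_mul_reducedC_two_mul (hu : ∀ k ≠ 0, u ^ k ≠ 1)
    (ht : ∀ k, u ^ (2 * k + 1) * t ^ 2 ≠ 1) (i m : ℕ) :
    ∑ p ∈ antidiagonal (2 * m), reducedB u t i p.1 * reducedC u t (i + p.1) p.2 =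
      (1 - u ^ (i + 2 * m) * t) * (1 - u ^ (i + 2 * m + 1) * t) *
        ∑ p ∈ antidiagonal m, baileySummand (u ^ (2 * i + 1) * t ^ 2) (u ^ 2) p.1 p.2 := by
  have hdiagonal (n : ℕ) : reducedB u t i (2 * n) * reducedC u t (i + 2 * n) 0 =
      (1 - u ^ (i + 2 * n) * t) * (1 - u ^ (i + 2 * n + 1) * t) *
        baileySummand (u ^ (2 * i + 1) * t ^ 2) (u ^ 2) n 0 := by
    have hbailey : u ^ (2 * i + 1) * t ^ 2 * u ^ 2 = u ^ (2 * i + 3) * t ^ 2 := by ring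
    have hC : reducedC u t (i + 2 * n) 0 = 1 - u ^ (i + 2 * n) * t := by simp [reducedC]
    rw [reducedB_two_mul, hC, baileySummand, hbailey, qPochhammer_zero, qPochhammer_zero, pow_zero,
      Nat.choose_zero_succ, pow_zero]
    ring
  rcases m with _ | m
  · simpa using hdiagonal 0
  · rw [show 2 * (m + 1) = 2 * m + 2 by ring, sum_antidiagonal_two_mul_add_two,
      Nat.sum_antidiagonal_succ', mul_add, mul_sum]
    congr 1
    · exact hdiagonal (m + 1)
    · refine sum_congr rfl fun p hp => ?_
      rw [reducedB_mul_reducedC_add_eq_mul_baileySummand hu ht, mem_antidiagonal.1 hp]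
      rfl

theorem sum_antidiagonal_reducedB_mul_reducedC (hu : ∀ k ≠ 0, u ^ k ≠ 1)
    (ht : ∀ k, u ^ (2 * k + 1) * t ^ 2 ≠ 1) (i d : ℕ) :
    ∑ p ∈ antidiagonal d, reducedB u t i p.1 * reducedC u t (i + p.1) p.2 =
      if d = 0 then (1 - u ^ i * t) * (1 - u ^ (i + 1) * t) else 0 := by
  obtain ⟨m, rfl | rfl⟩ := Nat.even_or_odd' d
  · have hq (k : ℕ) (hk : k ≠ 0) : (u ^ 2) ^ k ≠ 1 := by
      rw [← pow_mul]
      exact hu _ (by omega)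
    have ha (k : ℕ) (_ : k ≠ 0) : u ^ (2 * i + 1) * t ^ 2 * (u ^ 2) ^ k ≠ 1 := by
      convert ht (i + k) using 1
      ring
    rw [sum_antidiagonal_reducedB_mul_reducedC_two_mul hu ht, sum_antidiagonal_baileySummand hq ha]
    rcases m with _ | m <;> simp
  · rw [sum_antidiagonal_two_mul_add_one, if_neg (by omega)]
    exact sum_eq_zero fun p _ => reducedB_mul_reducedC_add_eq_zero u t i p.1 p.2

theorem sum_antidiagonal_bCoeff_mul_cCoeff (hu : ∀ k ≠ 0, u ^ k ≠ 1) (ht : ∀ k, u ^ k * t ≠ 1)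
    (ht₂ : ∀ k, u ^ (2 * k + 1) * t ^ 2 ≠ 1) (i d : ℕ) :
    ∑ p ∈ antidiagonal d, bCoeff u t i (i + p.1) * cCoeff u t (i + p.1) (i + p.1 + p.2) =
      if d = 0 then 1 else 0 := by
  have hfactor : ∀ p ∈ antidiagonal d,
      bCoeff u t i (i + p.1) * cCoeff u t (i + p.1) (i + p.1 + p.2) =
        t ^ d * (∏ k ∈ Icc (i + 1) (i + d), (u ^ k - 1)) /
          ((1 - u ^ (i + 1) * t) * (1 - u ^ (i + d) * t)) *
            (reducedB u t i p.1 * reducedC u t (i + p.1) p.2) := by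
    rintro ⟨r, s⟩ hrs
    obtain rfl := mem_antidiagonal.1 hrs
    rw [bCoeff_add, cCoeff_add, ← add_assoc i r s, ← prod_Icc_mul_prod_Icc_add,
      mul_mul_mul_comm, div_mul_div_comm, pow_add]
    ring
  rw [sum_congr rfl hfactor, ← mul_sum, sum_antidiagonal_reducedB_mul_reducedC hu ht₂]
  split_ifs with hd
  · have hrow := sub_ne_zero.2 (ht (i + 1)).symm
    have hcolumn := sub_ne_zero.2 (ht i).symm
    rw [hd, pow_zero, add_zero, Icc_eq_empty (by omega), prod_empty, mul_one,
      mul_comm (1 - u ^ i * t), one_div_mul_cancel (mul_ne_zero hrow hcolumn)]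
  · exact mul_zero _

theorem c_chi0_inverse_general (hu : ∀ k ≠ 0, u ^ k ≠ 1) (ht : ∀ k, u ^ k * t ≠ 1)
    (ht₂ : ∀ k, u ^ (2 * k + 1) * t ^ 2 ≠ 1) (n : ℕ) :
    (Matrix.of fun i j : Fin n => bCoeff u t i j) * (Matrix.of fun i j : Fin n => cCoeff u t i j) =
      1 :=
  of_mul_of_eq_one_of_sum_antidiagonal (bCoeff_of_lt u t) (cCoeff_of_lt u t)
    (sum_antidiagonal_bCoeff_mul_cCoeff hu ht ht₂) n

end Coefficients

theorem U_pow_mul_T_pow_ne_one {a b : ℕ} (h : a ≠ 0 ∨ b ≠ 0) : U ^ a * T ^ b ≠ 1 := by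
  intro hUT
  have hX : (MvPolynomial.X 0 ^ a * MvPolynomial.X 1 ^ b : MvPolynomial (Fin 2) ℚ) = 1 :=
    IsFractionRing.injective (MvPolynomial (Fin 2) ℚ) Fut (by simpa [U, T] using hUT)
  have hzero : (0 : ℚ) ^ a * 0 ^ b = 1 := by
    simpa using congrArg (MvPolynomial.eval 0) hX
  rcases h with ha | hb
  · simp [ha] at hzero
  · simp [hb] at hzero

/-- The matrix `C = (c_{ij})` of the displayed closed formulas is the inverse of the
change-of-basis matrix `B = (b_{ij})` between the Eisenstein series attached to the
cusps `w_ν` and the `U(p)`-eigenfunctions, for the trivial character. -/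
theorem c_chi0_inverse (b c : ℕ → ℕ → Fut)
    -- b_{ij} = 0 for i > j
    (hb_zero : ∀ i j : ℕ, j < i → b i j = 0)
    -- b_{ij} for i ≤ j with j − i even
    (hb_even : ∀ i j : ℕ, i ≤ j → (j - i) % 2 = 0 →
      b i j = (-1 : Fut) ^ ((j - i) / 2) * T ^ (j - i) * (1 - U ^ (j + 1) * T) *
        (∏ k ∈ Finset.Icc (i + 1) j, (U ^ k - 1)) /
        ((1 - U ^ (i + 1) * T) *
          ∏ k ∈ Finset.Icc 1 ((j - i) / 2),
            ((1 - U ^ (2 * i + 1 + 2 * k) * T ^ 2) * (U ^ (2 * k) - 1))))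
    -- b_{ij} for i ≤ j with j − i odd
    (hb_odd : ∀ i j : ℕ, i ≤ j → (j - i) % 2 = 1 →
      b i j = (-1 : Fut) ^ ((j - i + 1) / 2) * T ^ (j - i) *
        (∏ k ∈ Finset.Icc (i + 1) j, (U ^ k - 1)) /
        ((1 - U ^ (i + 1) * T) *
          ∏ k ∈ Finset.Icc 1 ((j - i - 1) / 2),
            ((1 - U ^ (2 * i + 1 + 2 * k) * T ^ 2) * (U ^ (2 * k) - 1))))
    -- c_{ij} = 0 for i > j
    (hc_zero : ∀ i j : ℕ, j < i → c i j = 0)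
    -- c_{ij} for i ≤ j with i ≡ j (mod 2)
    (hc_even : ∀ i j : ℕ, i ≤ j → (j - i) % 2 = 0 →
      c i j = U ^ ((j - i) * (j - i + 2) / 4) * T ^ (j - i) * (1 - U ^ i * T) *
        (∏ k ∈ Finset.Icc (i + 1) j, (U ^ k - 1)) /
        ((1 - U ^ j * T) *
          ∏ k ∈ Finset.Icc 1 ((j - i) / 2),
            ((1 - U ^ (i + j - 1 + 2 * k) * T ^ 2) * (U ^ (2 * k) - 1))))
    -- c_{ij} for i ≤ j with i ≢ j (mod 2)
    (hc_odd : ∀ i j : ℕ, i ≤ j → (j - i) % 2 = 1 →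
      c i j = U ^ (((j - i) ^ 2 - 1) / 4) * T ^ (j - i) *
        (∏ k ∈ Finset.Icc (i + 1) j, (U ^ k - 1)) /
        ((1 - U ^ j * T) *
          ∏ k ∈ Finset.Icc 1 ((j - i - 1) / 2),
            ((1 - U ^ (i + j + 2 * k) * T ^ 2) * (U ^ (2 * k) - 1)))) :
    ∀ n : ℕ,
      (Matrix.of fun i j : Fin (n + 1) => b i j) * (Matrix.of fun i j : Fin (n + 1) => c i j)
        = 1 := by
  obtain rfl : b = bCoeff U T := by
    funext i j
    unfold bCoeff
    split_ifs with hlt hparity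
    exacts [hb_zero i j hlt, hb_even i j (by omega) hparity, hb_odd i j (by omega) (by omega)]
  obtain rfl : c = cCoeff U T := by
    funext i j
    unfold cCoeff
    split_ifs with hlt hparity
    exacts [hc_zero i j hlt, hc_even i j (by omega) hparity, hc_odd i j (by omega) (by omega)]
  exact fun n => c_chi0_inverse_general
    (fun k hk => by simpa using U_pow_mul_T_pow_ne_one (b := 0) (.inl hk))
    (fun k => by simpa using U_pow_mul_T_pow_ne_one (a := k) (.inr one_ne_zero))
    (fun k => U_pow_mul_T_pow_ne_one (.inr two_ne_zero)) (n + 1)
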